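/- For all integers n > n′ ≥ 1, a single object O of type 𝒯_{n,n′} with initial value s solves wait-free binary consensus among n processes: in the algorithm where each process with input x ∈ {0,1} applies op_x to O and decides the value returned, every crash-free execution satisfies agreement, validity, and wait-freedom (each process decides after one step). -/

import Mathlib

/-! The first operation applied to the object fixes a bit `x`, the input of the process applying
it, and as long as at most `n` operations `op_0`, `op_1` are applied in total each of them
returns `x`.  In a crash-free execution each of the `n` processes applies at most one operation,
at its first step, and then stays in an output state.  The bookkeeping is the invariant
`OneShotInv`, which says that the index of the object value counts the decided processes; it is
preserved by steps (`OneShotInv.step`).  Decisions persist (`HasDecided.oneShot_done`), so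
agreement and validity can be read off the final configuration (`OneShotInv.exists_value`),
and a single step always leads to an output state (`oneShot_step_decides`). -/

namespace RecoverableConsensus

/-- A deterministic object type: a set of values, operations and responses together with a
transition function assigning to each (value, operation) pair a unique response and a unique
resulting value. -/
structure DetType : Type 1 where
  Value : Type
  Op : Type
  Resp : Type
  δ : Value → Op → Resp × Value

/-- A type is readable if it has a Read operation that returns (an injective encoding of)
the current value of the object without changing it. -/
def Readable (T : DetType) : Prop :=
  ∃ (read : T.Op) (ι : T.Value → T.Resp),
    Function.Injective ι ∧ ∀ v, T.δ v read = (ι v, v)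

/-- The register type over the value set `V`: the operation `none` is Read (returning the
current value without changing it) and `some v` is Write(v) (changing the value to `v`). -/
def RegisterType (V : Type) : DetType where
  Value := V
  Op := Option V
  Resp := V
  δ := fun u op =>
    match op with
    | none => (u, u)
    | some v => (v, v)

def IsRegister (T : DetType) : Prop := ∃ V : Type, T = RegisterType V

/-- An event is either a step by a process or a crash of a process. -/
inductive Event (n : ℕ) : Type where
  | step : Fin n → Event n
  | crash : Fin n → Event n
deriving DecidableEq

/-- An algorithm for `n` processes: a collection of shared objects, each with a deterministic
type and an initial value, and for each process a deterministic state machine with an initial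
state depending on the process's binary input.  Each state determines the process's next step
(`pending`: an operation applied to a designated object, or `none` for a no-op); the state
reached after a step is determined by the current state and the response received (`next`).
`output i s = some v` means that `s` is an output state of process `i` for the value `v`;
processes in output states take only no-op steps. -/
structure Algorithm (n : ℕ) : Type 1 where
  ObjIdx : Type
  objType : ObjIdx → DetType
  objInit : (o : ObjIdx) → (objType o).Value
  PState : Fin n → Type
  init : (i : Fin n) → Bool → PState i
  pending : (i : Fin n) → PState i → Option ((o : ObjIdx) × (objType o).Op)
  next : (i : Fin n) → PState i → (o : ObjIdx) → (objType o).Resp → PState i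
  output : (i : Fin n) → PState i → Option Bool
  output_noop : ∀ i s, output i s ≠ none → pending i s = none

/-- A configuration assigns a state to each process and a value to each object. -/
structure Config {n : ℕ} (A : Algorithm n) : Type where
  pstate : (i : Fin n) → A.PState i
  oval : (o : A.ObjIdx) → (A.objType o).Value

variable {n : ℕ}

/-- The effect of one event on a configuration.  A crash of `p_i` resets `p_i` to its initial
state (for its input) and leaves all object values unchanged; a step of `p_i` applies its
pending operation (if any) to the designated object, receiving the response determined by the
type's transition function. -/
noncomputable def applyEvent (A : Algorithm n) (input : Fin n → Bool) (C : Config A) :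
    Event n → Config A
  | .crash i => { C with pstate := Function.update C.pstate i (A.init i (input i)) }
  | .step i =>
    letI : DecidableEq A.ObjIdx := Classical.decEq _
    match A.pending i (C.pstate i) with
    | none => C
    | some ⟨o, op⟩ =>
      { pstate := Function.update C.pstate i
          (A.next i (C.pstate i) o ((A.objType o).δ (C.oval o) op).1),
        oval := Function.update C.oval o ((A.objType o).δ (C.oval o) op).2 }

/-- Since the algorithm is deterministic, a finite execution from `C` is determined by its
schedule, i.e. its list of events; `run A input C σ` is the configuration `Cσ` reached by
applying the events of `σ` in order from `C`. -/
noncomputable def run (A : Algorithm n) (input : Fin n → Bool) (C : Config A) :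
    List (Event n) → Config A
  | [] => C
  | e :: σ => run A input (applyEvent A input C e) σ

/-- The initial configuration: every process in its initial state, every object at its
initial value. -/
def initConfig (A : Algorithm n) (input : Fin n → Bool) : Config A :=
  ⟨fun i => A.init i (input i), A.objInit⟩

/-- Process `i` has decided `v` in `Cσ`: at some point along the execution `σ` from `C`,
process `i` was in an output state for `v`. -/
def HasDecided (A : Algorithm n) (input : Fin n → Bool) (C : Config A)
    (σ : List (Event n)) (i : Fin n) (v : Bool) : Prop :=
  ∃ τ, τ <+: σ ∧ A.output i ((run A input C τ).pstate i) = some v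

def CrashFree (σ : List (Event n)) : Prop := ∀ i : Fin n, Event.crash i ∉ σ

/-- The first `k` events of an infinite execution. -/
def initSeg (e : ℕ → Event n) (k : ℕ) : List (Event n) := (List.range k).map e

/-- Agreement: in every execution no two processes decide different values. -/
def Agreement (A : Algorithm n) : Prop :=
  ∀ (input : Fin n → Bool) (σ : List (Event n)) (i j : Fin n) (v w : Bool),
    HasDecided A input (initConfig A input) σ i v →
    HasDecided A input (initConfig A input) σ j w → v = w

/-- Validity: every decided value is the input of some process. -/
def Validity (A : Algorithm n) : Prop :=
  ∀ (input : Fin n → Bool) (σ : List (Event n)) (i : Fin n) (v : Bool),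
    HasDecided A input (initConfig A input) σ i v → ∃ j, input j = v

/-- Recoverable wait-freedom: every process, starting from its initial state, either crashes
or decides within a finite number of its own steps.  Equivalently: in every infinite execution
in which process `i` starts at (or is reset by a crash to) its initial state, takes infinitely
many steps and crashes only finitely often, it eventually reaches an output state. -/
def RecWaitFree (A : Algorithm n) : Prop :=
  ∀ (input : Fin n → Bool) (C : Config A) (e : ℕ → Event n) (i : Fin n),
    (C.pstate i = A.init i (input i) ∨ ∃ k, e k = Event.crash i) →
    (∀ m, ∃ k, m ≤ k ∧ e k = Event.step i) →
    (∃ m, ∀ k, m ≤ k → e k ≠ Event.crash i) →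
    ∃ (k : ℕ) (v : Bool), A.output i ((run A input C (initSeg e k)).pstate i) = some v

/-- A recoverable wait-free binary consensus algorithm. -/
def SolvesRecConsensus (A : Algorithm n) : Prop :=
  Agreement A ∧ Validity A ∧ RecWaitFree A

/-- Agreement restricted to crash-free executions. -/
def AgreementCF (A : Algorithm n) : Prop :=
  ∀ (input : Fin n → Bool) (σ : List (Event n)), CrashFree σ →
    ∀ (i j : Fin n) (v w : Bool),
      HasDecided A input (initConfig A input) σ i v →
      HasDecided A input (initConfig A input) σ j w → v = w

/-- Validity restricted to crash-free executions. -/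
def ValidityCF (A : Algorithm n) : Prop :=
  ∀ (input : Fin n → Bool) (σ : List (Event n)), CrashFree σ →
    ∀ (i : Fin n) (v : Bool),
      HasDecided A input (initConfig A input) σ i v → ∃ j, input j = v

/-- Wait-freedom: in crash-free executions, every process that takes infinitely many steps
decides. -/
def WaitFree (A : Algorithm n) : Prop :=
  ∀ (input : Fin n → Bool) (e : ℕ → Event n),
    (∀ (k : ℕ) (i : Fin n), e k ≠ Event.crash i) →
    ∀ i : Fin n, (∀ m, ∃ k, m ≤ k ∧ e k = Event.step i) →
    ∃ (k : ℕ) (v : Bool),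
      A.output i ((run A input (initConfig A input) (initSeg e k)).pstate i) = some v

/-- A wait-free binary consensus algorithm (for the model in which crashes are permanent,
i.e. only crash-free executions are relevant). -/
def SolvesWFConsensus (A : Algorithm n) : Prop :=
  AgreementCF A ∧ ValidityCF A ∧ WaitFree A

/-- The number of crashes of process `i` in `σ`. -/
def crashCount (i : Fin n) (σ : List (Event n)) : ℕ :=
  (σ.filter fun e => decide (e = Event.crash i)).length

def isStepBelow (i : Fin n) : Event n → Bool
  | .step j => decide (j < i)
  | .crash _ => false

/-- The total number of steps taken by processes `p_0, …, p_{i-1}` in `σ`. -/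
def stepsBelow (i : Fin n) (σ : List (Event n)) : ℕ := (σ.filter (isStepBelow i)).length

/-- The crash bound: for every process `p_i`, the number of crashes of `p_i` is at most
`z·n` times the total number of steps of `p_0, …, p_{i-1}` (for `i = 0` this says that `p_0`
never crashes). -/
def EMem (z : ℕ) (σ : List (Event n)) : Prop :=
  ∀ i : Fin n, crashCount i σ ≤ z * n * stepsBelow i σ

/-- `𝓔_z`: executions satisfying the crash bound. -/
def ESet (n z : ℕ) : Set (List (Event n)) := { σ | EMem z σ }

/-- `𝓔*_z`: executions satisfying the crash bound in every prefix. -/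
def EStarSet (n z : ℕ) : Set (List (Event n)) := { σ | ∀ τ, τ <+: σ → EMem z τ }

/-- `e` is an event by a process in `P`. -/
def eventBy (P : Set (Fin n)) : Event n → Prop
  | .step i => i ∈ P
  | .crash i => i ∈ P

/-- The set of processes `P` is `v`-univalent in the execution `α` from `C` with respect to
the set of executions `𝒜`. -/
def VUnivalentIn (A : Algorithm n) (input : Fin n → Bool) (C : Config A)
    (𝒜 : Set (List (Event n))) (P : Set (Fin n)) (α : List (Event n)) (v : Bool) : Prop :=
  α ∈ 𝒜 ∧ ∀ β : List (Event n), (∀ e ∈ β, eventBy P e) → (α ++ β) ∈ 𝒜 →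
    ∀ (i : Fin n) (w : Bool), HasDecided A input C (α ++ β) i w → w = v

/-- The set of processes `P` is bivalent in the execution `α` from `C` with respect to `𝒜`. -/
def BivalentIn (A : Algorithm n) (input : Fin n → Bool) (C : Config A)
    (𝒜 : Set (List (Event n))) (P : Set (Fin n)) (α : List (Event n)) : Prop :=
  ∀ v : Bool, ∃ β : List (Event n), (∀ e ∈ β, eventBy P e) ∧ (α ++ β) ∈ 𝒜 ∧
    ∃ i : Fin n, HasDecided A input C (α ++ β) i v

/-- `P` is univalent in `α` with respect to `𝒜`: `v`-univalent for some `v`. -/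
def UnivalentIn (A : Algorithm n) (input : Fin n → Bool) (C : Config A)
    (𝒜 : Set (List (Event n))) (P : Set (Fin n)) (α : List (Event n)) : Prop :=
  ∃ v : Bool, VUnivalentIn A input C 𝒜 P α v

/-- `α ∈ 𝒜` is critical with respect to `𝒜`: `α` is bivalent with respect to `𝒜` and every
nonempty extension of `α` inside `𝒜` is univalent with respect to `𝒜`. -/
def Critical (A : Algorithm n) (input : Fin n → Bool) (C : Config A)
    (𝒜 : Set (List (Event n))) (α : List (Event n)) : Prop :=
  α ∈ 𝒜 ∧ BivalentIn A input C 𝒜 Set.univ α ∧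
  ∀ β : List (Event n), β ≠ [] → (α ++ β) ∈ 𝒜 → UnivalentIn A input C 𝒜 Set.univ (α ++ β)

/-- Process `i` is on team `v` in `Cα` (with respect to `𝒜`): `α p_i` is `v`-univalent. -/
def OnTeam (A : Algorithm n) (input : Fin n → Bool) (C : Config A)
    (𝒜 : Set (List (Event n))) (α : List (Event n)) (i : Fin n) (v : Bool) : Prop :=
  VUnivalentIn A input C 𝒜 Set.univ (α ++ [Event.step i]) v

/-- Process `i` is poised to apply an operation to object `O` in configuration `C`. -/
def PoisedAt (A : Algorithm n) (C : Config A) (i : Fin n) (O : A.ObjIdx) : Prop :=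
  ∃ op, A.pending i (C.pstate i) = some ⟨O, op⟩

/-- `σ ∈ 𝒮(P)`: a crash-free schedule in which each process of `P` takes at most one step
and no other process takes a step. -/
def IsSched (P : Set (Fin n)) (σ : List (Event n)) : Prop :=
  ∃ l : List (Fin n), l.Nodup ∧ (∀ j ∈ l, j ∈ P) ∧ σ = l.map Event.step

/-- The schedule `λ_k = c_k c_{k+1} ⋯ c_{n-1}`. -/
def lambdaSched (n k : ℕ) : List (Event n) :=
  ((List.finRange n).filter fun j => decide (k ≤ j.val)).map Event.crash

/-- `U_v`: the set of values of object `O` reachable from `Dα` by a schedule in `𝒮(𝒫)`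
whose first process is on team `v`. -/
def USetCfg (A : Algorithm n) (input : Fin n → Bool) (D : Config A)
    (𝒜 : Set (List (Event n))) (α : List (Event n)) (O : A.ObjIdx) (v : Bool) :
    Set (A.objType O).Value :=
  { w | ∃ (j : Fin n) (σ : List (Event n)), OnTeam A input D 𝒜 α j v ∧
        IsSched {k : Fin n | k ≠ j} σ ∧
        w = (run A input D (α ++ Event.step j :: σ)).oval O }

/-- The configuration `Dα` is `v`-hiding. -/
def VHiding (A : Algorithm n) (input : Fin n → Bool) (D : Config A)
    (𝒜 : Set (List (Event n))) (α : List (Event n)) (O : A.ObjIdx) (v : Bool) : Prop :=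
  USetCfg A input D 𝒜 α O false ∩ USetCfg A input D 𝒜 α O true = ∅ ∧
  (run A input D α).oval O ∈ USetCfg A input D 𝒜 α O v

/-- The configuration `Dα` is `n`-recording. -/
def NRecordingCfg (A : Algorithm n) (input : Fin n → Bool) (D : Config A)
    (𝒜 : Set (List (Event n))) (α : List (Event n)) (O : A.ObjIdx) : Prop :=
  USetCfg A input D 𝒜 α O false ∩ USetCfg A input D 𝒜 α O true = ∅ ∧
  ∀ v : Bool, (run A input D α).oval O ∈ USetCfg A input D 𝒜 α O v →
    ∃! j : Fin n, OnTeam A input D 𝒜 α j (!v)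

/-- Apply the operations `o i` of the processes listed in `σ`, in order, to an object of type
`T`, starting from the value `u`. -/
def applyOps (T : DetType) (o : Fin n → T.Op) : T.Value → List (Fin n) → T.Value
  | u, [] => u
  | u, i :: σ => applyOps T o (T.δ u (o i)).2 σ

/-- `U_x`: the set of values obtainable by applying the operations of the processes of a
duplicate-free schedule whose first process is on team `x` to an object with initial value
`u`. -/
def UVals (T : DetType) (o : Fin n → T.Op) (u : T.Value) (team : Fin n → Bool) (x : Bool) :
    Set T.Value :=
  { v | ∃ (i : Fin n) (σ : List (Fin n)), team i = x ∧ (i :: σ).Nodup ∧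
        v = applyOps T o u (i :: σ) }

/-- A deterministic type `T` is `n`-recording. -/
def NRecording (n : ℕ) (T : DetType) : Prop :=
  ∃ (u : T.Value) (team : Fin n → Bool) (o : Fin n → T.Op),
    (∀ x : Bool, ∃ i, team i = x) ∧
    (UVals T o u team false ∩ UVals T o u team true = ∅) ∧
    (∀ x : Bool, u ∈ UVals T o u team x → ∃! i, team i = !x)

end RecoverableConsensus
namespace RecoverableConsensus

/-- The values of the type `𝒯_{n,n'}`: `s`, `s_⊥`, and `s_{x,i}` for `x ∈ {0,1}` and
`i ∈ {1, …, n-1}` (here `mid x i` with `i : Fin (n-1)` represents `s_{x, i+1}`). -/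
inductive TVal (n : ℕ) : Type where
  | s : TVal n
  | bot : TVal n
  | mid : Bool → Fin (n - 1) → TVal n
deriving DecidableEq

/-- The operations of `𝒯_{n,n'}`. -/
inductive TOp : Type where
  | op0 | op1 | opR
deriving DecidableEq

/-- The responses of `𝒯_{n,n'}`: a bit, a value, or `⊥`. -/
inductive TResp (n : ℕ) : Type where
  | bit : Bool → TResp n
  | val : TVal n → TResp n
  | botR : TResp n
deriving DecidableEq

/-- The deterministic (non-readable) type `𝒯_{n,n'}` for `n > n' ≥ 1`. -/
def TType (n n' : ℕ) (hn : 2 ≤ n) : DetType where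
  Value := TVal n
  Op := TOp
  Resp := TResp n
  δ := fun v op =>
    match v, op with
    | .s, .op0 => (.bit false, .mid false ⟨0, by omega⟩)
    | .s, .op1 => (.bit true, .mid true ⟨0, by omega⟩)
    | .s, .opR => (.val .s, .s)
    | .bot, _ => (.botR, .bot)
    | .mid x i, .op0 =>
        if h : i.val + 1 < n - 1 then (.bit x, .mid x ⟨i.val + 1, h⟩) else (.bit x, .bot)
    | .mid x i, .op1 =>
        if h : i.val + 1 < n - 1 then (.bit x, .mid x ⟨i.val + 1, h⟩) else (.bit x, .bot)
    | .mid x i, .opR =>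
        if i.val + 1 ≤ n' then (.val (.mid x i), .mid x i) else (.botR, .bot)

/-- The algorithm uses only objects of type `T` together with registers. -/
def UsesTypeAndRegisters {n : ℕ} (A : Algorithm n) (T : DetType) : Prop :=
  ∀ o : A.ObjIdx, A.objType o = T ∨ IsRegister (A.objType o)

end RecoverableConsensus
namespace RecoverableConsensus

/-- Local states for the one-shot consensus algorithm: `start x` (about to apply `op_x`) and
`done v` (decided `v`). -/
inductive OSState : Type where
  | start : Bool → OSState
  | done : Bool → OSState
deriving DecidableEq

/-- The wait-free consensus algorithm for `n` processes using a single object of type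
`𝒯_{n,n'}` with initial value `s`: a process with input `x` applies `op_x` and decides the
value returned. -/
def oneShotAlg (n n' : ℕ) (hn : 2 ≤ n) : Algorithm n where
  ObjIdx := Unit
  objType _ := TType n n' hn
  objInit _ := TVal.s
  PState _ := OSState
  init _ x := .start x
  pending _ s :=
    match s with
    | .start x => some ⟨(), if x then TOp.op1 else TOp.op0⟩
    | .done _ => none
  next _ s _ r :=
    match s, r with
    | .start _, TResp.bit b => .done b
    | .start x, _ => .done x
    | .done v, _ => .done v
  output _ s :=
    match s with
    | .done v => some v
    | _ => none
  output_noop := by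
    intro i s h
    cases s with
    | start x => simp at h
    | done v => rfl

/-- Local states for the recoverable consensus algorithm: `phase0 x` (about to apply `op_R`),
`phase1 x` (saw `s`, about to apply `op_x`), `done v` (decided `v`). -/
inductive RecState : Type where
  | phase0 : Bool → RecState
  | phase1 : Bool → RecState
  | done : Bool → RecState
deriving DecidableEq

/-- The recoverable wait-free consensus algorithm for `n'` processes using a single object of
type `𝒯_{n,n'}` with initial value `s`: a process with input `x` first applies `op_R`; if the
response is `s_{v,i}` it decides `v`; if the response is `⊥` it decides `0`; otherwise (the
response is `s`) it applies `op_x` and decides the value returned. -/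
def recAlg (n n' : ℕ) (hn : 2 ≤ n) : Algorithm n' where
  ObjIdx := Unit
  objType _ := TType n n' hn
  objInit _ := TVal.s
  PState _ := RecState
  init _ x := .phase0 x
  pending _ s :=
    match s with
    | .phase0 _ => some ⟨(), TOp.opR⟩
    | .phase1 x => some ⟨(), if x then TOp.op1 else TOp.op0⟩
    | .done _ => none
  next _ s _ r :=
    match s, r with
    | .phase0 x, TResp.val TVal.s => .phase1 x
    | .phase0 _, TResp.val (TVal.mid v _) => .done v
    | .phase0 _, TResp.botR => .done false
    | .phase0 x, _ => .phase0 x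
    | .phase1 _, TResp.bit b => .done b
    | .phase1 x, _ => .phase1 x
    | .done v, _ => .done v
  output _ s :=
    match s with
    | .done v => some v
    | _ => none
  output_noop := by
    intro i s h
    cases s with
    | phase0 x => simp at h
    | phase1 x => simp at h
    | done v => rfl

end RecoverableConsensus

namespace RecoverableConsensus

variable {n n' : ℕ} {hn : 2 ≤ n} {input : Fin n → Bool}

/-! ### Single steps of the algorithm -/

lemma run_append (A : Algorithm n) (input : Fin n → Bool) (C : Config A)
    (σ τ : List (Event n)) :
    run A input C (σ ++ τ) = run A input (run A input C σ) τ := by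
  induction σ generalizing C with
  | nil => rfl
  | cons e σ ih => exact ih _

lemma oneShot_step_done {C : Config (oneShotAlg n n' hn)} {i : Fin n} {v : Bool}
    (h : C.pstate i = OSState.done v) :
    applyEvent (oneShotAlg n n' hn) input C (.step i) = C := by
  have hp : (oneShotAlg n n' hn).pending i (C.pstate i) = none := by rw [h]; rfl
  simp only [applyEvent]
  split
  · rfl
  · simp_all

lemma oneShot_step_start {C : Config (oneShotAlg n n' hn)} {i : Fin n} {x : Bool}
    (h : C.pstate i = OSState.start x) :
    (applyEvent (oneShotAlg n n' hn) input C (.step i)).pstate =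
        Function.update C.pstate i ((oneShotAlg n n' hn).next i (OSState.start x) ()
          ((TType n n' hn).δ (C.oval ()) (if x then TOp.op1 else TOp.op0)).1) ∧
      (applyEvent (oneShotAlg n n' hn) input C (.step i)).oval () =
        ((TType n n' hn).δ (C.oval ()) (if x then TOp.op1 else TOp.op0)).2 := by
  have hp : (oneShotAlg n n' hn).pending i (C.pstate i)
      = some ⟨(), if x then TOp.op1 else TOp.op0⟩ := by rw [h]; rfl
  simp only [applyEvent]
  split
  · simp_all
  · rename_i o op heq
    rw [hp] at heq
    cases heq
    refine ⟨?_, ?_⟩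
    · rw [← h]; rfl
    · exact @Function.update_self _ _ (Classical.decEq _) _ _ _

/-! ### The invariant of crash-free executions -/

/-- The invariant of crash-free executions.  Either nobody has moved and the object still has
value `s`, or some input `x` was applied first; then every process is in its initial state or
has decided `x`, and the object has value `s_{x,k}` with `k` the number of decided processes,
unless all processes have decided.  Since `TVal.mid x k` encodes `s_{x,k+1}`, the number of
decided processes is `k + 1`. -/
def OneShotInv (input : Fin n → Bool) (C : Config (oneShotAlg n n' hn)) : Prop :=
  (C.oval () = TVal.s ∧ ∀ i, C.pstate i = OSState.start (input i)) ∨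
  ∃ x : Bool, (∃ j, input j = x) ∧
    (∀ i, C.pstate i = OSState.start (input i) ∨ C.pstate i = OSState.done x) ∧
    ((∃ (k : Fin (n - 1)) (S : Finset (Fin n)), C.oval () = TVal.mid x k ∧
        (∀ i, i ∈ S ↔ C.pstate i = OSState.done x) ∧ S.card = k.val + 1) ∨
      ∀ i, C.pstate i = OSState.done x)

/-- Responses stay correct because a process applies its operation at most once: before the
`n`-th operation at most `n - 1` have been applied, so the object does not have value `s_⊥`. -/
lemma OneShotInv.step {C : Config (oneShotAlg n n' hn)} (h : OneShotInv input C) (i : Fin n) :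
    OneShotInv input (applyEvent (oneShotAlg n n' hn) input C (.step i)) := by
  rcases h with ⟨hs, hi⟩ | ⟨x, hx, hi, h⟩
  · right
    obtain ⟨hp, ho⟩ := oneShot_step_start (input := input) (hi i)
    have key : (TType n n' hn).δ (C.oval ()) (if input i then TOp.op1 else TOp.op0)
        = (.bit (input i), .mid (input i) ⟨0, by omega⟩) := by
      rw [hs]; cases input i <;> rfl
    rw [key] at hp ho
    refine ⟨input i, ⟨i, rfl⟩, fun j => ?_, Or.inl ⟨⟨0, by omega⟩, {i}, ho, fun j => ?_, by simp⟩⟩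
    · rw [hp]
      by_cases hj : j = i
      · subst hj; right; rw [Function.update_self]; rfl
      · left; rw [Function.update_of_ne hj]; exact hi j
    · rw [hp, Finset.mem_singleton]
      by_cases hj : j = i
      · subst hj; rw [Function.update_self]; exact ⟨fun _ => rfl, fun _ => rfl⟩
      · rw [Function.update_of_ne hj, hi j]
        exact ⟨fun h => absurd h hj, fun h => by cases h⟩
  · rcases hi i with hst | hdn
    swap
    · rw [oneShot_step_done hdn]; exact Or.inr ⟨x, hx, hi, h⟩
    right
    rcases h with ⟨k, S, hk, hS, hc⟩ | hall
    swap
    · rw [hall i] at hst; cases hst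
    obtain ⟨hp, ho⟩ := oneShot_step_start (input := input) hst
    have key : (TType n n' hn).δ (C.oval ()) (if input i then TOp.op1 else TOp.op0)
        = if h : k.val + 1 < n - 1 then (.bit x, .mid x ⟨k.val + 1, h⟩) else (.bit x, .bot) := by
      rw [hk]; cases input i <;> rfl
    have key1 : ((TType n n' hn).δ (C.oval ()) (if input i then TOp.op1 else TOp.op0)).1
        = TResp.bit x := by
      rw [key]; split <;> rfl
    rw [key1] at hp
    rw [key] at ho
    have hself : (applyEvent (oneShotAlg n n' hn) input C (.step i)).pstate i
        = OSState.done x := by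
      rw [hp, Function.update_self]; rfl
    have hne : ∀ j, j ≠ i → (applyEvent (oneShotAlg n n' hn) input C (.step i)).pstate j
        = C.pstate j := fun j hj => by rw [hp, Function.update_of_ne hj]
    have hiS : i ∉ S := fun hmem => by
      have := (hS i).1 hmem
      rw [hst] at this; cases this
    have hS' : ∀ j, j ∈ insert i S ↔
        (applyEvent (oneShotAlg n n' hn) input C (.step i)).pstate j = OSState.done x := by
      intro j
      by_cases hj : j = i
      · subst hj; exact ⟨fun _ => hself, fun _ => Finset.mem_insert_self _ _⟩
      · rw [hne j hj, ← hS j, Finset.mem_insert]; simp [hj]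
    have hc' : (insert i S).card = k.val + 1 + 1 := by
      rw [Finset.card_insert_of_notMem hiS, hc]
    refine ⟨x, hx, fun j => ?_, ?_⟩
    · by_cases hj : j = i
      · subst hj; exact Or.inr hself
      · rw [hne j hj]; exact hi j
    · by_cases hlt : k.val + 1 < n - 1
      · rw [dif_pos hlt] at ho
        exact Or.inl ⟨_, _, ho, hS', hc'⟩
      · -- The object was at `s_{x,n-1}`, so this step completes the set of decided processes.
        right
        have huniv : insert i S = Finset.univ := by
          apply Finset.eq_univ_of_card
          have := k.isLt
          rw [hc', Fintype.card_fin]; omega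
        intro j
        rw [← hS' j, huniv]
        exact Finset.mem_univ j

lemma OneShotInv.run {C : Config (oneShotAlg n n' hn)} (h : OneShotInv input C)
    {σ : List (Event n)} (hσ : CrashFree σ) :
    OneShotInv input (run (oneShotAlg n n' hn) input C σ) := by
  induction σ generalizing C with
  | nil => exact h
  | cons e σ ih =>
    have hσ' : CrashFree σ := fun i hi => hσ i (List.mem_cons_of_mem _ hi)
    cases e with
    | step i => exact ih (h.step i) hσ'
    | crash i => exact absurd List.mem_cons_self (hσ i)

lemma oneShot_inv (hn : 2 ≤ n) (input : Fin n → Bool) {σ : List (Event n)}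
    (hσ : CrashFree σ) :
    OneShotInv input (run (oneShotAlg n n' hn) input
      (initConfig (oneShotAlg n n' hn) input) σ) :=
  OneShotInv.run (Or.inl ⟨rfl, fun _ => rfl⟩) hσ

/-! ### Decisions -/

lemma oneShot_done_run {C : Config (oneShotAlg n n' hn)} {i : Fin n} {v : Bool}
    (h : C.pstate i = OSState.done v) {σ : List (Event n)} (hσ : CrashFree σ) :
    (run (oneShotAlg n n' hn) input C σ).pstate i = OSState.done v := by
  induction σ generalizing C with
  | nil => exact h
  | cons e σ ih =>
    have hσ' : CrashFree σ := fun i hi => hσ i (List.mem_cons_of_mem _ hi)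
    cases e with
    | crash j => exact absurd List.mem_cons_self (hσ j)
    | step j =>
      refine ih ?_ hσ'
      rcases hj : C.pstate j with x | w
      · have hij : i ≠ j := by
          rintro rfl
          rw [h] at hj; cases hj
        rw [(oneShot_step_start hj).1, Function.update_of_ne hij]
        exact h
      · rw [oneShot_step_done hj]; exact h

lemma oneShot_output {i : Fin n} {s : OSState} {v : Bool}
    (h : (oneShotAlg n n' hn).output i s = some v) : s = OSState.done v := by
  cases s with
  | start x => cases h
  | done w => cases h; rfl

/-- A process that decided at some point of a crash-free execution is still in the
corresponding output state at its end. -/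
lemma HasDecided.oneShot_done {C : Config (oneShotAlg n n' hn)} {σ : List (Event n)}
    {i : Fin n} {v : Bool} (h : HasDecided (oneShotAlg n n' hn) input C σ i v)
    (hσ : CrashFree σ) :
    (RecoverableConsensus.run (oneShotAlg n n' hn) input C σ).pstate i = OSState.done v := by
  obtain ⟨τ, ⟨ρ, rfl⟩, hτ⟩ := h
  rw [run_append]
  exact oneShot_done_run (oneShot_output hτ) fun j hj => hσ j (List.mem_append_right _ hj)

lemma OneShotInv.exists_value {C : Config (oneShotAlg n n' hn)} (h : OneShotInv input C)
    {i : Fin n} {v : Bool} (hi : C.pstate i = OSState.done v) :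
    (∃ j, input j = v) ∧ ∀ j w, C.pstate j = OSState.done w → w = v := by
  rcases h with ⟨-, hs⟩ | ⟨x, hx, hd, -⟩
  · rw [hs i] at hi; cases hi
  · have hval : ∀ j w, C.pstate j = OSState.done w → w = x := by
      intro j w hw
      rcases hd j with hj | hj <;> rw [hw] at hj <;> cases hj
      rfl
    obtain rfl := hval i v hi
    exact ⟨hx, hval⟩

lemma oneShot_step_decides (C : Config (oneShotAlg n n' hn)) (i : Fin n) :
    ∃ v, (applyEvent (oneShotAlg n n' hn) input C (.step i)).pstate i = OSState.done v := by
  rcases hi : C.pstate i with x | v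
  · rw [(oneShot_step_start hi).1, Function.update_self]
    generalize ((TType n n' hn).δ (C.oval ()) (if x then TOp.op1 else TOp.op0)).1 = r
    rcases r with b | _ | _
    exacts [⟨b, rfl⟩, ⟨x, rfl⟩, ⟨x, rfl⟩]
  · rw [oneShot_step_done hi]; exact ⟨v, hi⟩

end RecoverableConsensus

open RecoverableConsensus in
/-- For all integers `n > n' ≥ 1`, a single object of type `𝒯_{n,n'}` with
initial value `s` solves wait-free binary consensus among `n` processes: in the algorithm in
which each process with input `x` applies `op_x` and decides the value returned, every
crash-free execution satisfies agreement and validity, and each process has decided after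
taking one step. -/
theorem oneShotAlg_solves_consensus
    (n n' : ℕ) (h1 : 1 ≤ n') (h2 : n' < n) (hn : 2 ≤ n) :
    (∀ (input : Fin n → Bool) (σ : List (Event n)), CrashFree σ →
      ∀ (i j : Fin n) (v w : Bool),
        HasDecided (oneShotAlg n n' hn) input (initConfig (oneShotAlg n n' hn) input) σ i v →
        HasDecided (oneShotAlg n n' hn) input (initConfig (oneShotAlg n n' hn) input) σ j w →
        v = w) ∧
    (∀ (input : Fin n → Bool) (σ : List (Event n)), CrashFree σ →
      ∀ (i : Fin n) (v : Bool),
        HasDecided (oneShotAlg n n' hn) input (initConfig (oneShotAlg n n' hn) input) σ i v →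
        ∃ j : Fin n, input j = v) ∧
    (∀ (input : Fin n → Bool) (σ : List (Event n)), CrashFree σ →
      ∀ i : Fin n, Event.step i ∈ σ →
        ∃ v : Bool,
          (oneShotAlg n n' hn).output i
            ((run (oneShotAlg n n' hn) input (initConfig (oneShotAlg n n' hn) input)
              σ).pstate i) = some v) := by
  refine ⟨fun input σ hσ i j v w hv hw => ?_, fun input σ hσ i v hv => ?_,
    fun input σ hσ i hi => ?_⟩
  · exact ((oneShot_inv hn input hσ).exists_value (hw.oneShot_done hσ)).2 i v
      (hv.oneShot_done hσ)
  · exact ((oneShot_inv hn input hσ).exists_value (hv.oneShot_done hσ)).1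
  · obtain ⟨α, β, rfl⟩ := List.append_of_mem hi
    obtain ⟨v, hv⟩ := oneShot_step_decides (input := input)
      (run (oneShotAlg n n' hn) input (initConfig (oneShotAlg n n' hn) input) α) i
    refine ⟨v, ?_⟩
    have hβ : CrashFree β := fun j hj =>
      hσ j (List.mem_append_right _ (List.mem_cons_of_mem _ hj))
    have hdone := oneShot_done_run (input := input) hv hβ
    rw [run_append]
    exact congrArg ((oneShotAlg n n' hn).output i) hdone
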